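/- arXiv:2212.05433 — 2 statements merged into one kernel-verified Lean document; each statement's English description precedes it below -/
import Mathlib

section
/- Let N ⊊ M be nodes, let I ∈ inner(N) and J ∈ middle_M(N). Then C(I) is not a subset of C(J). (Hence, in any order that refines inclusion of the sets C(·), if I and J are comparable then J lies below I.) -/
open Set

variable {Λ W ι : Type*}

/-- The clique of a leaf: vertices whose `Cl`-set contains the leaf. -/
def leafC (Cl : W → Set Λ) (ℓ : Λ) : Set W := {v | ℓ ∈ Cl v}

/-- `V(N)`: vertices with `Cl(v) ⊆ N`. -/
def Vset (Cl : W → Set Λ) (N : Set Λ) : Set W := {v | Cl v ⊆ N}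

/-- `U(N)`: vertices with `Cl(v) = N`. -/
def Uset (Cl : W → Set Λ) (N : Set Λ) : Set W := {v | Cl v = N}

/-- `I(N)`: vertices with `Cl(v) ⊊ N`. -/
def Iset (Cl : W → Set Λ) (N : Set Λ) : Set W := {v | Cl v ⊂ N}

/-- `E(N)`: vertices with `N ⊊ Cl(v)`. -/
def Eset (Cl : W → Set Λ) (N : Set Λ) : Set W := {v | N ⊂ Cl v}

/-- A vertex is compatible with a node `N`. -/
def Compatible (Cl : W → Set Λ) (v : W) (N : Set Λ) : Prop :=
  Cl v ⊆ N ∨ N ⊆ Cl v ∨ Cl v ∩ N = ∅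

/-- `inner(N)`: for a singleton node `{ℓ}` the components with `C(I) = C(ℓ)`;
for a non-singleton node the components with `C(I) ∩ I(N) ≠ ∅` and
`U(N) ∪ E(N) ⊊ C(I)`. -/
def innerSet (Cl : W → Set Λ) (CI : ι → Set W) (N : Set Λ) : Set ι :=
  {I | (∃ ℓ, N = {ℓ} ∧ CI I = leafC Cl ℓ) ∨
       ((¬ ∃ ℓ, N = {ℓ}) ∧ (CI I ∩ Iset Cl N).Nonempty ∧
        Uset Cl N ∪ Eset Cl N ⊂ CI I)}

/-- `middle_M(N) = {I ∈ inner(M) \ inner(N) : C(I) ∩ V(N) ≠ ∅}`. -/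
def middleSet (Cl : W → Set Λ) (CI : ι → Set W) (M N : Set Λ) : Set ι :=
  {I | I ∈ innerSet Cl CI M ∧ I ∉ innerSet Cl CI N ∧ (CI I ∩ Vset Cl N).Nonempty}

/-!
The set `inner(N)` is upward closed for inclusion of the sets `C(·)`, so `C(I)` is never contained
in `C(J)` when `J` lies outside `inner(N)`. Away from singletons both defining conditions of
`inner(N)` are monotone in `C(I)`. For `N = {ℓ}` the Helly condition puts `C(J)` inside
some `C(ℓ')`, and `C(ℓ) = C(I) ⊆ C(J) ⊆ C(ℓ')` collapses because leaf cliques are incomparable.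
-/

section

variable {Cl : W → Set Λ} {CI : ι → Set W} {S : Set W} {N : Set Λ} {ℓ : Λ} {I J : ι}

theorem subset_leafC_iff : S ⊆ leafC Cl ℓ ↔ ℓ ∈ ⋂ v ∈ S, Cl v :=
  mem_iInter₂.symm

theorem eq_leafC_of_leafC_subset (hℓ : ∀ ℓ', ℓ ≠ ℓ' → ¬ leafC Cl ℓ ⊆ leafC Cl ℓ')
    (hS : (⋂ v ∈ S, Cl v).Nonempty) (hℓS : leafC Cl ℓ ⊆ S) : S = leafC Cl ℓ := by
  obtain ⟨ℓ', hℓ'⟩ := hS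
  have hSℓ' : S ⊆ leafC Cl ℓ' := subset_leafC_iff.mpr hℓ'
  obtain rfl : ℓ = ℓ' := by_contra fun hne ↦ hℓ ℓ' hne (hℓS.trans hSℓ')
  exact hSℓ'.antisymm hℓS

theorem mem_innerSet_singleton : I ∈ innerSet Cl CI {ℓ} ↔ CI I = leafC Cl ℓ := by
  simp [innerSet]

theorem mem_innerSet_iff_of_not_singleton (hN : ¬ ∃ ℓ, N = {ℓ}) :
    I ∈ innerSet Cl CI N ↔
      (CI I ∩ Iset Cl N).Nonempty ∧ Uset Cl N ∪ Eset Cl N ⊂ CI I :=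
  (or_iff_right fun ⟨ℓ, hℓ, _⟩ ↦ hN ⟨ℓ, hℓ⟩).trans (and_iff_right hN)

theorem stmt3_general (hleaf : ∀ ℓ ℓ' : Λ, ℓ ≠ ℓ' → ¬ leafC Cl ℓ ⊆ leafC Cl ℓ')
    (hHelly : (⋂ v ∈ CI J, Cl v).Nonempty) (hI : I ∈ innerSet Cl CI N) (hIJ : CI I ⊆ CI J) :
    J ∈ innerSet Cl CI N := by
  by_cases hN : ∃ ℓ, N = {ℓ}
  · obtain ⟨ℓ, rfl⟩ := hN
    rw [mem_innerSet_singleton] at hI ⊢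
    exact eq_leafC_of_leafC_subset (hleaf ℓ) hHelly (hI ▸ hIJ)
  · rw [mem_innerSet_iff_of_not_singleton hN] at hI ⊢
    obtain ⟨hmeets, hcontains⟩ := hI
    exact ⟨hmeets.mono (inter_subset_inter_left _ hIJ), hcontains.trans_subset hIJ⟩

end

theorem stmt3 [Fintype Λ] [Fintype W] [Fintype ι]
    (Cl : W → Set Λ) (CI : ι → Set W)
    (hCl : ∀ v, (Cl v).Nonempty)
    (hleaf : ∀ ℓ ℓ' : Λ, ℓ ≠ ℓ' → ¬ leafC Cl ℓ ⊆ leafC Cl ℓ')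
    (hCI : ∀ I, (CI I).Nonempty)
    (hHelly : ∀ I, (⋂ v ∈ CI I, Cl v).Nonempty)
    (N M : Set Λ) (hNne : N.Nonempty) (hMne : M.Nonempty)
    (hNM : N ⊂ M)
    (I J : ι) (hI : I ∈ innerSet Cl CI N) (hJ : J ∈ middleSet Cl CI M N) :
    ¬ CI I ⊆ CI J := by
  obtain ⟨-, hJN, -⟩ := hJ
  exact fun hIJ ↦ hJN (stmt3_general hleaf (hHelly J) hI hIJ)
end

section
/- Let N ⊊ M be nodes with V(N) ≠ ∅; if N is a singleton, assume additionally that every vertex is compatible with M. Then middle_M(N) ∪ inner(N) = {I ∈ inner(M) : C(I) ∩ V(N) ≠ ∅}. -/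
open Set

variable {Λ W ι : Type*}

/-!
When `V(N) ≠ ∅`, a component of `inner(N)` contains every `v` with `N ⊆ Cl v` and meets `V(N)`,
whether or not `N` is a singleton. Conversely, since `U(M) ∪ E(M)` consists of the vertices `v`
with `M ⊆ Cl v`, a component lies in `inner(M)`, for a non-singleton `M`, as soon as it contains
all of these and some vertex of `I(M)`. For `N ⊊ M` we have `V(N) ⊆ I(M)`, hence `inner(N) ⊆
inner(M)`, and so `middle_M(N)` and `inner(N)` partition the components of `inner(M)` that meet
`V(N)`.
-/

section InnerSet

variable {Cl : W → Set Λ} {CI : ι → Set W} {M N : Set Λ} {I : ι}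

theorem Uset_union_Eset (Cl : W → Set Λ) (N : Set Λ) :
    Uset Cl N ∪ Eset Cl N = {v | N ⊆ Cl v} := by
  ext v
  simp only [Uset, Eset, mem_union, mem_ofPred_eq, subset_iff_ssubset_or_eq, or_comm, eq_comm]

theorem Iset_subset_Vset (Cl : W → Set Λ) (N : Set Λ) : Iset Cl N ⊆ Vset Cl N :=
  fun _ hv => hv.1

theorem Vset_subset_Iset_of_ssubset (Cl : W → Set Λ) (hNM : N ⊂ M) : Vset Cl N ⊆ Iset Cl M :=
  fun _ hv => hv.trans_ssubset hNM

theorem nonempty_of_Vset_nonempty (hCl : ∀ v, (Cl v).Nonempty) (hV : (Vset Cl N).Nonempty) :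
    N.Nonempty :=
  let ⟨v, hv⟩ := hV
  (hCl v).mono hv

theorem not_exists_eq_singleton_of_ssubset (hN : N.Nonempty) (hNM : N ⊂ M) :
    ¬ ∃ ℓ, M = {ℓ} := by
  rintro ⟨ℓ, rfl⟩
  exact hN.ne_empty (ssubset_singleton_iff.mp hNM)

theorem Vset_singleton_subset_leafC (hCl : ∀ v, (Cl v).Nonempty) (ℓ : Λ) :
    Vset Cl {ℓ} ⊆ leafC Cl ℓ := by
  intro v hv
  have hv_eq : Cl v = {ℓ} := (hCl v).subset_singleton_iff.mp hv
  exact hv_eq.symm.subset rfl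

theorem mem_innerSet_of_not_exists_eq_singleton (hM : ¬ ∃ ℓ, M = {ℓ})
    (hmeet : (CI I ∩ Iset Cl M).Nonempty) (hsub : {v | M ⊆ Cl v} ⊆ CI I) :
    I ∈ innerSet Cl CI M := by
  obtain ⟨w, hwI, hwM⟩ := hmeet
  have hw_not_superset : ¬ M ⊆ Cl w := hwM.not_subset
  refine Or.inr ⟨hM, ⟨w, hwI, hwM⟩, ?_⟩
  rw [Uset_union_Eset]
  exact (ssubset_iff_of_subset hsub).mpr ⟨w, hwI, hw_not_superset⟩

theorem mem_of_mem_innerSet_of_subset {v : W} (hI : I ∈ innerSet Cl CI N) (hv : N ⊆ Cl v) :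
    v ∈ CI I := by
  rcases hI with ⟨ℓ, rfl, hC⟩ | ⟨-, -, hsub⟩
  · rw [hC]
    exact hv rfl
  · have hv_mem : v ∈ Uset Cl N ∪ Eset Cl N := (Uset_union_Eset Cl N).superset hv
    exact hsub.subset hv_mem

theorem inter_Vset_nonempty_of_mem_innerSet (hCl : ∀ v, (Cl v).Nonempty)
    (hV : (Vset Cl N).Nonempty) (hI : I ∈ innerSet Cl CI N) :
    (CI I ∩ Vset Cl N).Nonempty := by
  rcases hI with ⟨ℓ, rfl, hC⟩ | ⟨-, hmeet, -⟩
  · rwa [hC, inter_eq_right.mpr (Vset_singleton_subset_leafC hCl ℓ)]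
  · exact hmeet.mono (inter_subset_inter_right _ (Iset_subset_Vset Cl N))

theorem innerSet_subset_innerSet (hCl : ∀ v, (Cl v).Nonempty) (hNM : N ⊂ M)
    (hV : (Vset Cl N).Nonempty) :
    innerSet Cl CI N ⊆ innerSet Cl CI M := by
  intro I hI
  have hM : ¬ ∃ ℓ, M = {ℓ} :=
    not_exists_eq_singleton_of_ssubset (nonempty_of_Vset_nonempty hCl hV) hNM
  have hmeet : (CI I ∩ Iset Cl M).Nonempty :=
    (inter_Vset_nonempty_of_mem_innerSet hCl hV hI).mono
      (inter_subset_inter_right _ (Vset_subset_Iset_of_ssubset Cl hNM))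
  have hsub : {v | M ⊆ Cl v} ⊆ CI I := fun _ hv =>
    mem_of_mem_innerSet_of_subset hI (hNM.subset.trans hv)
  exact mem_innerSet_of_not_exists_eq_singleton hM hmeet hsub

theorem middleSet_eq_sdiff (Cl : W → Set Λ) (CI : ι → Set W) (M N : Set Λ) :
    middleSet Cl CI M N =
      {I | I ∈ innerSet Cl CI M ∧ (CI I ∩ Vset Cl N).Nonempty} \ innerSet Cl CI N := by
  ext I
  simp only [middleSet, mem_sdiff, mem_ofPred_eq]
  tauto

end InnerSet

theorem stmt4_general (Cl : W → Set Λ) (CI : ι → Set W) (hCl : ∀ v, (Cl v).Nonempty)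
    (N M : Set Λ) (hNM : N ⊂ M) (hV : (Vset Cl N).Nonempty) :
    middleSet Cl CI M N ∪ innerSet Cl CI N
      = {I | I ∈ innerSet Cl CI M ∧ (CI I ∩ Vset Cl N).Nonempty} := by
  rw [middleSet_eq_sdiff]
  exact sdiff_union_of_subset fun _ hI =>
    ⟨innerSet_subset_innerSet hCl hNM hV hI, inter_Vset_nonempty_of_mem_innerSet hCl hV hI⟩

theorem stmt4 [Fintype Λ] [Fintype W] [Fintype ι]
    (Cl : W → Set Λ) (CI : ι → Set W)
    (hCl : ∀ v, (Cl v).Nonempty)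
    (hleaf : ∀ ℓ ℓ' : Λ, ℓ ≠ ℓ' → ¬ leafC Cl ℓ ⊆ leafC Cl ℓ')
    (hCI : ∀ I, (CI I).Nonempty)
    (hHelly : ∀ I, (⋂ v ∈ CI I, Cl v).Nonempty)
    (N M : Set Λ) (hNne : N.Nonempty) (hMne : M.Nonempty)
    (hNM : N ⊂ M)
    (hV : (Vset Cl N).Nonempty)
    (hcompat : (∃ ℓ, N = {ℓ}) → ∀ v, Compatible Cl v M) :
    middleSet Cl CI M N ∪ innerSet Cl CI N
      = {I | I ∈ innerSet Cl CI M ∧ (CI I ∩ Vset Cl N).Nonempty} :=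
  stmt4_general Cl CI hCl N M hNM hV
end
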